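/- Let b be a prime and t ≥ 0 an integer, let D_1, D_2 be generating matrices of a digital (0,2)-sequence over F_b, and let E_1, E_2 be defined by E_1(i,r) = 0 for r ≤ t, E_1(i,r) = D_1(i, r − t) for r > t, and E_2(i,r) = D_2(i,r) for i ≤ t, r ≤ t, E_2(i,r) = 0 for i ≤ t, r > t, E_2(i,r) = 0 for i > t, r ≤ t, E_2(i,r) = D_2(i − t, r − t) for i > t, r > t. Let m ≥ t, let w_1 = 0 and let w_2 be an integer with m − w_2 − t ≥ 0 and w_2 ≥ t. Let Ẽ_1^{(m)} = E_1^{(m)} and let Ẽ_2^{(m)} be the column reduction of E_2^{(m)} with reduction index w_2. Then ρ_m(Ẽ_1^{(m)}, Ẽ_2^{(m)}) = m − w_2. -/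

import Mathlib

open Finset

/-- The family consisting of the first `d j` rows of each of the matrices `C j`
(a row index `≥ m` yields the zero vector). -/
def rowFamily {b s m : ℕ} (C : Fin s → Matrix (Fin m) (Fin m) (ZMod b))
    (d : Fin s → ℕ) : (Σ j : Fin s, Fin (d j)) → (Fin m → ZMod b) :=
  fun p r => if h : (p.2 : ℕ) < m then C p.1 ⟨(p.2 : ℕ), h⟩ r else 0

/-- The first `d j` rows of the matrices `C j` are linearly independent over `𝔽_b`. -/
def RowsLI {b s m : ℕ} (C : Fin s → Matrix (Fin m) (Fin m) (ZMod b))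
    (d : Fin s → ℕ) : Prop :=
  LinearIndependent (ZMod b) (rowFamily C d)

/-- The linear independence parameter `ρ_m(C_1, …, C_s)`: the largest `ρ` such that for
every choice of nonnegative integers `d_1 + ⋯ + d_s = ρ`, the corresponding first rows
of the matrices are linearly independent. -/
noncomputable def rho {b s m : ℕ} (C : Fin s → Matrix (Fin m) (Fin m) (ZMod b)) : ℕ :=
  sSup {ρ : ℕ | ∀ d : Fin s → ℕ, ∑ j, d j = ρ → RowsLI C d}

/-- Left upper `k × k` submatrix of an infinite matrix. -/
def upperLeft {b : ℕ} (C : Matrix ℕ ℕ (ZMod b)) (k : ℕ) :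
    Matrix (Fin k) (Fin k) (ZMod b) :=
  Matrix.of fun i r => C (i : ℕ) (r : ℕ)

/-- Column reduction with reduction index `w`: the first `m - min m w` columns are kept,
the last `min m w` columns are set to zero. -/
def colReduce {b m : ℕ} (C : Matrix (Fin m) (Fin m) (ZMod b)) (w : ℕ) :
    Matrix (Fin m) (Fin m) (ZMod b) :=
  Matrix.of fun i r => if (r : ℕ) < m - min m w then C i r else 0

/-- `C` is a family of generating matrices of a digital `(t,s)`-sequence over `𝔽_b`. -/
def IsDigitalSeq {b s : ℕ} (C : Fin s → Matrix ℕ ℕ (ZMod b)) (t : ℕ) : Prop :=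
  ∀ k : ℕ, max t 1 ≤ k → k - t ≤ rho (fun j => upperLeft (C j) k)

/-! Splitting the columns at `t` makes the rows of `E_1, E_2` block diagonal: the first `t` rows of
`E_2` are rows of `D_2` supported on the first `t` columns, and all other rows are rows of `D_1`,
`D_2` supported on the remaining columns. Hence independence can be checked in each block, where
it is the `(0,2)`-sequence property of `D`. Column reduction leaves `m - w₂` columns of `E_2`; if
`E_2` contributes more than `t` rows, its lower block still has enough columns, and otherwise only
rows of `E_1` remain in that block, which has `m - t ≥ m - w₂` unreduced columns. Conversely,
`E_2` alone has at most `m - w₂` independent rows, as these are supported on `m - w₂` columns. -/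

section LinearIndependence

variable {ι κ R M N : Type*}

theorem linearIndepOn_union_of_map_eq_zero [Ring R] [AddCommGroup M] [Module R M]
    [AddCommGroup N] [Module R N] {v : ι → M} {A B : Set ι} (f : M →ₗ[R] N)
    (hA : LinearIndepOn R (f ∘ v) A) (hfB : ∀ x ∈ B, f (v x) = 0) (hB : LinearIndepOn R v B) :
    LinearIndepOn R v (A ∪ B) := by
  have hker : Submodule.span R (v '' B) ≤ LinearMap.ker f :=
    Submodule.span_le.2 (Set.image_subset_iff.2 hfB)
  have hdisj : Disjoint (Submodule.span R (v '' A)) (LinearMap.ker f) := by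
    rw [Set.image_eq_range]
    exact Submodule.range_ker_disjoint hA
  exact (hA.of_comp f).union hB (hdisj.mono_right hker)

theorem card_le_card_support_of_linearIndependent [Ring R] [StrongRankCondition R] [Fintype ι]
    {v : ι → κ → R} (hv : LinearIndependent R v) (T : Finset κ)
    (hT : ∀ i, ∀ r ∉ T, v i r = 0) : Fintype.card ι ≤ #T := by
  have hext : v = Function.ExtendByZero.linearMap R ((↑) : T → κ) ∘ fun i r => v i r := by
    funext i r
    by_cases hr : r ∈ T
    · exact (Subtype.val_injective.extend_apply (fun r : T => v i r) 0 ⟨r, hr⟩).symm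
    · have hr' : ¬∃ x : T, (x : κ) = r := fun ⟨x, hx⟩ => hr (hx ▸ x.2)
      exact (hT i r hr).trans
        (Function.extend_apply' (fun r : T => v i r) (0 : κ → R) r hr').symm
  rw [hext] at hv
  simpa using (hv.of_comp _).fintype_card_le_finrank

end LinearIndependence

section Rho

variable {b s m : ℕ} {C : Fin s → Matrix (Fin m) (Fin m) (ZMod b)}

/-- Row `p.2` of the matrix `C p.1`, continued by zero rows. Indexing by the fixed type `Fin s × ℕ`
turns `RowsLI C d` into independence on a subset that grows with `d`. -/
def paddedRow (C : Fin s → Matrix (Fin m) (Fin m) (ZMod b)) (p : Fin s × ℕ) : Fin m → ZMod b :=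
  fun r => if h : p.2 < m then C p.1 ⟨p.2, h⟩ r else 0

theorem rowsLI_iff_linearIndepOn {d : Fin s → ℕ} :
    RowsLI C d ↔ LinearIndepOn (ZMod b) (paddedRow C) {p | p.2 < d p.1} := by
  let e : (Σ j : Fin s, Fin (d j)) ≃ {p : Fin s × ℕ | p.2 < d p.1} :=
    { toFun := fun p => ⟨(p.1, p.2), p.2.2⟩
      invFun := fun p => ⟨p.1.1, p.1.2, p.2⟩ }
  exact linearIndependent_equiv' e rfl

theorem RowsLI.mono {d d' : Fin s → ℕ} (h : RowsLI C d') (hd : d ≤ d') : RowsLI C d :=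
  rowsLI_iff_linearIndepOn.2 <|
    (rowsLI_iff_linearIndepOn.1 h).mono fun p hp => lt_of_lt_of_le hp (hd p.1)

theorem rowsLI_of_sum_eq_zero {d : Fin s → ℕ} (hd : ∑ j, d j = 0) : RowsLI C d := by
  have : IsEmpty (Σ j : Fin s, Fin (d j)) :=
    ⟨fun p => (p.2.2.trans_eq (sum_eq_zero_iff.1 hd p.1 (mem_univ p.1))).not_ge (Nat.zero_le _)⟩
  exact linearIndependent_empty_type

theorem rowsLI_of_sum_eq_rho {d : Fin s → ℕ} (hd : ∑ j, d j = rho C) : RowsLI C d := by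
  by_cases hbdd : BddAbove {ρ : ℕ | ∀ d : Fin s → ℕ, ∑ j, d j = ρ → RowsLI C d}
  · refine Nat.sSup_mem ⟨0, ?_⟩ hbdd d hd
    exact fun _ => rowsLI_of_sum_eq_zero
  · rw [rho, Nat.sSup_of_not_bddAbove hbdd] at hd
    exact rowsLI_of_sum_eq_zero hd

theorem rowsLI_of_sum_le_rho {d : Fin s → ℕ} (hd : ∑ j, d j ≤ rho C) : RowsLI C d := by
  rcases isEmpty_or_nonempty (Fin s) with _ | ⟨⟨j⟩⟩
  · exact rowsLI_of_sum_eq_zero (by simp)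
  · let excess : Fin s → ℕ := Pi.single j (rho C - ∑ i, d i)
    have hsum : ∑ i, (d + excess) i = rho C := by
      simp only [excess, Pi.add_apply, sum_add_distrib, sum_pi_single', mem_univ, if_true]
      omega
    exact (rowsLI_of_sum_eq_rho hsum).mono le_self_add

/-- Over the zero ring every family is independent, so the set defining `rho` is unbounded and its
`sSup` is the junk value `0`. -/
theorem nontrivial_of_rho_pos (h : 0 < rho C) : Nontrivial (ZMod b) := by
  by_contra hb
  rw [not_nontrivial_iff_subsingleton] at hb
  have huniv : {ρ : ℕ | ∀ d : Fin s → ℕ, ∑ j, d j = ρ → RowsLI C d} = Set.univ :=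
    Set.eq_univ_of_forall fun _ _ _ => linearIndependent_of_subsingleton
  rw [rho, huniv, Nat.sSup_of_not_bddAbove not_bddAbove_univ] at h
  exact h.false

variable [Nontrivial (ZMod b)]

theorem RowsLI.le_card_support {d : Fin s → ℕ} (h : RowsLI C d) (j : Fin s) {T : Finset (Fin m)}
    (hT : ∀ i, ∀ r ∉ T, C j i r = 0) : d j ≤ #T := by
  have hrows : LinearIndependent (ZMod b) fun i : Fin (d j) => paddedRow C (j, i) :=
    LinearIndependent.comp h (Sigma.mk j) sigma_mk_injective
  refine (Fintype.card_fin (d j)).symm.trans_le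
    (card_le_card_support_of_linearIndependent hrows T fun i r hr => ?_)
  by_cases hi : (i : ℕ) < m
  · exact (dif_pos hi).trans (hT _ r hr)
  · exact dif_neg hi

theorem le_card_support_of_forall_rowsLI {ρ : ℕ}
    (h : ∀ d : Fin s → ℕ, ∑ j, d j = ρ → RowsLI C d) (j : Fin s) {T : Finset (Fin m)}
    (hT : ∀ i, ∀ r ∉ T, C j i r = 0) : ρ ≤ #T := by
  simpa using (h (Pi.single j ρ) (by simp)).le_card_support j hT

theorem rho_le_card_support (j : Fin s) {T : Finset (Fin m)}
    (hT : ∀ i, ∀ r ∉ T, C j i r = 0) : rho C ≤ #T :=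
  csSup_le' fun _ h => le_card_support_of_forall_rowsLI h j hT

theorem le_rho_of_forall_rowsLI [NeZero s] {n : ℕ}
    (h : ∀ d : Fin s → ℕ, ∑ j, d j = n → RowsLI C d) : n ≤ rho C :=
  le_csSup ⟨_, fun _ hρ => le_card_support_of_forall_rowsLI hρ 0 (T := univ) (by simp)⟩ h

end Rho

section BlockShift

variable {b s t m : ℕ} {D E : Fin s → Matrix ℕ ℕ (ZMod b)} {τ : Fin s → ℕ}

/-- The first `k` entries of row `p.2` of the infinite matrix `C p.1`. -/
def truncRow (C : Fin s → Matrix ℕ ℕ (ZMod b)) (k : ℕ) (p : Fin s × ℕ) : Fin k → ZMod b :=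
  fun r => C p.1 p.2 r

theorem IsDigitalSeq.linearIndepOn_truncRow {u : ℕ} (hD : IsDigitalSeq D u) {d : Fin s → ℕ}
    {k : ℕ} (hd : ∑ j, d j + u ≤ k) :
    LinearIndepOn (ZMod b) (truncRow D k) {p | p.2 < d p.1} := by
  have hdk (j : Fin s) : d j ≤ k :=
    (single_le_sum (fun _ _ => Nat.zero_le _) (mem_univ j)).trans (by omega)
  have hLI : RowsLI (fun j => upperLeft (D j) k) d := by
    rcases Nat.eq_zero_or_pos k with rfl | hk
    · exact rowsLI_of_sum_eq_zero (by omega)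
    · exact rowsLI_of_sum_le_rho ((Nat.le_sub_of_add_le hd).trans (hD k (by omega)))
  refine (rowsLI_iff_linearIndepOn.1 hLI).congr fun p hp => ?_
  exact funext fun r => dif_pos (lt_of_lt_of_le hp (hdk p.1))

/-- The matrices `C̃_j^{(m)}`: left upper `m × m` submatrices, column reduced with indices `w j`. -/
def reducedFamily (C : Fin s → Matrix ℕ ℕ (ZMod b)) (m : ℕ) (w : Fin s → ℕ) :
    Fin s → Matrix (Fin m) (Fin m) (ZMod b) :=
  fun j => colReduce (upperLeft (C j) m) (w j)

theorem paddedRow_reducedFamily {C : Fin s → Matrix ℕ ℕ (ZMod b)} {w : Fin s → ℕ}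
    {p : Fin s × ℕ} {r : Fin m} (hp : p.2 < m) (hr : r + w p.1 < m) :
    paddedRow (reducedFamily C m w) p r = C p.1 p.2 r := by
  have hr' : (r : ℕ) < m - min m (w p.1) := by omega
  simp [paddedRow, reducedFamily, colReduce, upperLeft, hp, hr']

/-- `E j` is block diagonal with diagonal blocks the left upper `τ j × t` submatrix of `D j` and
all of `D j`. The pair `E_1, E_2` of the theorem has `τ = (0, t)`. -/
def IsBlockShift (D E : Fin s → Matrix ℕ ℕ (ZMod b)) (t : ℕ) (τ : Fin s → ℕ) : Prop :=
  ∀ j i r, E j i r =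
    if i < τ j then (if r < t then D j i r else 0)
    else (if r < t then 0 else D j (i - τ j) (r - t))

namespace IsBlockShift

variable {u k : ℕ} {w d : Fin s → ℕ}

theorem apply_upper (hE : IsBlockShift D E t τ) {j : Fin s} {i r : ℕ} (hi : i < τ j)
    (hr : r < t) : E j i r = D j i r := by
  rw [hE, if_pos hi, if_pos hr]

theorem apply_lower_left (hE : IsBlockShift D E t τ) {j : Fin s} {i r : ℕ} (hi : τ j ≤ i)
    (hr : r < t) : E j i r = 0 := by
  rw [hE, if_neg hi.not_gt, if_pos hr]

theorem apply_lower (hE : IsBlockShift D E t τ) {j : Fin s} {i : ℕ} (r : ℕ) (hi : τ j ≤ i) :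
    E j i (r + t) = D j (i - τ j) r := by
  rw [hE, if_neg hi.not_gt, if_neg (Nat.le_add_left t r).not_gt, Nat.add_sub_cancel]

theorem paddedRow_lower_left (hE : IsBlockShift D E t τ) {p : Fin s × ℕ} (hp : τ p.1 ≤ p.2)
    {r : Fin m} (hr : (r : ℕ) < t) : paddedRow (reducedFamily E m w) p r = 0 := by
  simp [paddedRow, reducedFamily, colReduce, upperLeft, hE.apply_lower_left hp hr]

theorem linearIndepOn_upper (hE : IsBlockShift D E t τ) (hD : IsDigitalSeq D u)
    (hdm : ∀ j, d j ≤ m) (hkm : k ≤ m) (hkt : k ≤ t) (hsum : ∑ j, min (d j) (τ j) + u ≤ k)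
    (hw : ∀ j, 0 < min (d j) (τ j) → k + w j ≤ m) :
    LinearIndepOn (ZMod b)
      (LinearMap.funLeft (ZMod b) (ZMod b) (Fin.castLE hkm) ∘ paddedRow (reducedFamily E m w))
      {p | p.2 < d p.1 ∧ p.2 < τ p.1} := by
  have hLI := (hD.linearIndepOn_truncRow hsum).mono
    (t := {p | p.2 < d p.1 ∧ p.2 < τ p.1}) fun p hp => lt_min hp.1 hp.2
  refine hLI.congr fun p ⟨hpd, hpτ⟩ => funext fun r => ?_
  have hcol : r + w p.1 < m := by have := hw p.1 (by omega); omega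
  exact ((paddedRow_reducedFamily (r := Fin.castLE hkm r) (hpd.trans_le (hdm p.1)) hcol).trans
    (hE.apply_upper hpτ (by simp; omega))).symm

theorem linearIndepOn_lower (hE : IsBlockShift D E t τ) (hD : IsDigitalSeq D u)
    (hdm : ∀ j, d j ≤ m) (hkm : k + t ≤ m) (hsum : ∑ j, (d j - τ j) + u ≤ k)
    (hw : ∀ j, τ j < d j → k + t + w j ≤ m) :
    LinearIndepOn (ZMod b) (paddedRow (reducedFamily E m w)) {p | p.2 < d p.1 ∧ τ p.1 ≤ p.2} := by
  set B : Set (Fin s × ℕ) := {p | p.2 < d p.1 ∧ τ p.1 ≤ p.2}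
  let unshift : Fin s × ℕ → Fin s × ℕ := fun p => (p.1, p.2 - τ p.1)
  let col : Fin k → Fin m := fun r => ⟨r + t, by omega⟩
  have hmaps : unshift '' B ⊆ {p | p.2 < d p.1 - τ p.1} := by
    rintro _ ⟨p, ⟨hpd, hpτ⟩, rfl⟩
    exact Nat.sub_lt_sub_right hpτ hpd
  have hinj : Set.InjOn unshift B := by
    rintro ⟨j, i⟩ ⟨_, hi⟩ ⟨j', i'⟩ ⟨_, hi'⟩ h
    obtain ⟨rfl, h⟩ := Prod.mk.inj h
    exact Prod.ext rfl ((tsub_left_inj hi hi').1 h)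
  have hLI : LinearIndepOn (ZMod b) (truncRow D k ∘ unshift) B :=
    ((hD.linearIndepOn_truncRow hsum).mono hmaps).comp_of_image hinj
  refine LinearIndepOn.of_comp (LinearMap.funLeft (ZMod b) (ZMod b) col)
    (hLI.congr fun p ⟨hpd, hpτ⟩ => funext fun r => ?_)
  have hcol : (col r : ℕ) + w p.1 < m := by
    have := hw p.1 (hpτ.trans_lt hpd)
    simp only [col]
    omega
  exact ((paddedRow_reducedFamily (r := col r) (hpd.trans_le (hdm p.1)) hcol).trans
    (hE.apply_lower r hpτ)).symm

theorem rowsLI_reducedFamily (hE : IsBlockShift D E t τ) (hD : IsDigitalSeq D u)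
    (hdm : ∀ j, d j ≤ m) {k₁ k₂ : ℕ} (hk₁ : k₁ ≤ t) (hk₂ : k₂ + t ≤ m)
    (hsum₁ : ∑ j, min (d j) (τ j) + u ≤ k₁) (hsum₂ : ∑ j, (d j - τ j) + u ≤ k₂)
    (hw₁ : ∀ j, 0 < min (d j) (τ j) → k₁ + w j ≤ m)
    (hw₂ : ∀ j, τ j < d j → k₂ + t + w j ≤ m) :
    RowsLI (reducedFamily E m w) d := by
  have hk₁m : k₁ ≤ m := by omega
  have hLI := linearIndepOn_union_of_map_eq_zero _
    (hE.linearIndepOn_upper hD hdm hk₁m hk₁ hsum₁ hw₁)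
    (fun p hp => funext fun r => hE.paddedRow_lower_left hp.2 (r.2.trans_le hk₁))
    (hE.linearIndepOn_lower hD hdm hk₂ hsum₂ hw₂)
  exact rowsLI_iff_linearIndepOn.2 <|
    hLI.mono fun p hp => (lt_or_ge p.2 (τ p.1)).imp (⟨hp, ·⟩) (⟨hp, ·⟩)

end IsBlockShift

end BlockShift

section Pair

variable {b t m w₂ : ℕ} {D E : Fin 2 → Matrix ℕ ℕ (ZMod b)}

theorem IsBlockShift.rowsLI_pair (hE : IsBlockShift D E t ![0, t]) (hD : IsDigitalSeq D 0)
    (hwt : t ≤ w₂) {d : Fin 2 → ℕ} (hd : d 0 + d 1 + w₂ ≤ m) :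
    RowsLI (reducedFamily E m ![0, w₂]) d := by
  have hdm : ∀ j, d j ≤ m := Fin.forall_fin_two.2 ⟨by omega, by omega⟩
  refine hE.rowsLI_reducedFamily hD hdm (k₁ := min (d 1) t) (k₂ := d 0 + (d 1 - t))
    (min_le_right _ _) (by omega) (by simp) (by simp) ?_ ?_ <;>
  · simp only [Fin.forall_fin_two, Matrix.cons_val_zero, Matrix.cons_val_one]
    omega

theorem upperLeft_colReduce_eq_reducedFamily :
    ![upperLeft (E 0) m, colReduce (upperLeft (E 1) m) w₂] = reducedFamily E m ![0, w₂] := by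
  funext j
  fin_cases j
  · ext i r
    simp [reducedFamily, colReduce]
  · rfl

theorem strict_seq_reduced_rho_case_w_general (hD : IsDigitalSeq D 0)
    (hE1 : ∀ i r : ℕ, E 0 i r = if r < t then 0 else D 0 i (r - t))
    (hE2 : ∀ i r : ℕ, E 1 i r =
      if i < t then (if r < t then D 1 i r else 0)
      else (if r < t then 0 else D 1 (i - t) (r - t)))
    (hw : w₂ ≤ m) (hwt : t ≤ w₂) :
    rho ![upperLeft (E 0) m, colReduce (upperLeft (E 1) m) w₂] = m - w₂ := by
  have : Nontrivial (ZMod b) := nontrivial_of_rho_pos (hD 1 le_rfl)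
  have hE : IsBlockShift D E t ![0, t] :=
    Fin.forall_fin_two.2 ⟨by simpa using hE1, by simpa using hE2⟩
  rw [upperLeft_colReduce_eq_reducedFamily]
  apply le_antisymm
  · have hT : ∀ i, ∀ r ∉ ({r | (r : ℕ) < m - w₂} : Finset (Fin m)),
        reducedFamily E m ![0, w₂] 1 i r = 0 := fun i r hr => by
      simp_all [reducedFamily, colReduce]
    refine (rho_le_card_support 1 hT).trans ?_
    rw [Fin.card_filter_val_lt]
    exact min_le_right _ _
  · refine le_rho_of_forall_rowsLI fun d hd => hE.rowsLI_pair hD hwt ?_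
    rw [Fin.sum_univ_two] at hd
    omega

end Pair

/-- Remark 3, Case 1 (`max {t, w_2} = w_2`): for the strict `(t,2)`-sequence `E_1, E_2`
and reduction indices `w_1 = 0` and `t ≤ w_2` with `m - w_2 - t ≥ 0`, one has
`ρ_m(Ẽ_1^{(m)}, Ẽ_2^{(m)}) = m - w_2`. -/
theorem strict_seq_reduced_rho_case_w {b t m w₂ : ℕ} (hb : b.Prime)
    (D E : Fin 2 → Matrix ℕ ℕ (ZMod b))
    (hD : ∀ k : ℕ, 1 ≤ k → rho (fun j => upperLeft (D j) k) = k)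
    (hE1 : ∀ i r : ℕ, E 0 i r = if r < t then 0 else D 0 i (r - t))
    (hE2 : ∀ i r : ℕ, E 1 i r =
      if i < t then (if r < t then D 1 i r else 0)
      else (if r < t then 0 else D 1 (i - t) (r - t)))
    (hm : t ≤ m) (hw : w₂ + t ≤ m) (hwt : t ≤ w₂) :
    rho ![upperLeft (E 0) m, colReduce (upperLeft (E 1) m) w₂] = m - w₂ :=
  strict_seq_reduced_rho_case_w_general
    (fun k hk => (Nat.sub_le k 0).trans_eq (hD k (le_of_max_le_right hk)).symm) hE1 hE2
    (by omega) hwt
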